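/- Let M be a separable metric space with metric d and a Borel measure μ such that every ball has finite measure, and let 𝒜 be a family of measurable subsets of M. Suppose 𝒜 satisfies the two conditions in the definition of a doubling family with constant C, except that in the definition of Q̃ the condition μ(R) ≤ 2μ(Q) is replaced by μ(R) ≤ μ(Q). Then 𝒜 is a doubling family (with the original definition, using μ(R) ≤ 2μ(Q)) with constant C². -/

import Mathlib

open MeasureTheory Metric Set
open scoped ENNReal

noncomputable section

/-- `𝒜` is a doubling family with constant `C`:  it consists of measurable sets, for each
`Q ∈ 𝒜` the union `Q̃` of all `R ∈ 𝒜` meeting `Q` with `μ R ≤ 2 μ Q` is contained in some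
`S ∈ 𝒜` with `μ S ≤ C μ Q`, and either `μ M ≤ C μ Q` with `M ∈ 𝒜`, or some `R ∈ 𝒜`
contains `Q` with `2 μ Q ≤ μ R ≤ C μ Q`. -/
def DoublingFamily {M : Type*} [MeasurableSpace M] (μ : Measure M)
    (A : Set (Set M)) (C : ℝ) : Prop :=
  (∀ Q ∈ A, MeasurableSet Q) ∧
  ∀ Q ∈ A,
    (∃ S ∈ A, μ S ≤ ENNReal.ofReal C * μ Q ∧
      (⋃ R ∈ {R | R ∈ A ∧ (R ∩ Q).Nonempty ∧ μ R ≤ 2 * μ Q}, R) ⊆ S) ∧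
    ((μ Set.univ ≤ ENNReal.ofReal C * μ Q ∧ Set.univ ∈ A) ∨
      (∃ R ∈ A, Q ⊆ R ∧ 2 * μ Q ≤ μ R ∧ μ R ≤ ENNReal.ofReal C * μ Q))

/-- The variant of the doubling-family condition in which, in the definition of `Q̃`,
the requirement `μ R ≤ 2 μ Q` is replaced by `μ R ≤ μ Q`. -/
def DoublingFamilyVariant {M : Type*} [MeasurableSpace M] (μ : Measure M)
    (A : Set (Set M)) (C : ℝ) : Prop :=
  (∀ Q ∈ A, MeasurableSet Q) ∧
  ∀ Q ∈ A,
    (∃ S ∈ A, μ S ≤ ENNReal.ofReal C * μ Q ∧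
      (⋃ R ∈ {R | R ∈ A ∧ (R ∩ Q).Nonempty ∧ μ R ≤ μ Q}, R) ⊆ S) ∧
    ((μ Set.univ ≤ ENNReal.ofReal C * μ Q ∧ Set.univ ∈ A) ∨
      (∃ R ∈ A, Q ⊆ R ∧ 2 * μ Q ≤ μ R ∧ μ R ≤ ENNReal.ofReal C * μ Q))

section Enlargement

variable {M : Type*} [MeasurableSpace M] {μ : Measure M} {A : Set (Set M)} {C : ℝ}
  {Q Q' : Set M} {t t' : ℝ≥0∞}

/-- The union of the members of `A` that meet `Q` and have measure at most `t`. The set `Q̃` of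
a doubling family is the case `t = 2 * μ Q`, that of the variant the case `t = μ Q`; keeping `t`
separate from `Q` allows enlargements of different sets to be compared. -/
def enlargement (μ : Measure M) (A : Set (Set M)) (t : ℝ≥0∞) (Q : Set M) : Set M :=
  ⋃ R ∈ {R | R ∈ A ∧ (R ∩ Q).Nonempty ∧ μ R ≤ t}, R

theorem enlargement_mono (ht : t ≤ t') (hQ : Q ⊆ Q') :
    enlargement μ A t Q ⊆ enlargement μ A t' Q' :=
  biUnion_subset_biUnion_left fun _ ⟨hRA, hRQ, hRt⟩ =>
    ⟨hRA, hRQ.mono (inter_subset_inter_right _ hQ), hRt.trans ht⟩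

theorem le_ofReal_sq_mul_of_le_of_le {a b c : ℝ≥0∞} (hC : 0 ≤ C)
    (hab : a ≤ ENNReal.ofReal C * b) (hbc : b ≤ ENNReal.ofReal C * c) :
    a ≤ ENNReal.ofReal (C ^ 2) * c :=
  calc
    a ≤ ENNReal.ofReal C * (ENNReal.ofReal C * c) := by grw [hab, hbc]
    _ = ENNReal.ofReal (C ^ 2) * c := by rw [ENNReal.ofReal_pow hC, sq, mul_assoc]

theorem measure_le_ofReal_sq_mul_of_subset (hC : 0 ≤ C) (hQ : Q ⊆ Q')
    (hle : μ Q' ≤ ENNReal.ofReal C * μ Q) : μ Q' ≤ ENNReal.ofReal (C ^ 2) * μ Q :=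
  le_ofReal_sq_mul_of_le_of_le hC hle ((measure_mono hQ).trans hle)

namespace DoublingFamilyVariant

theorem exists_enlargement_two_mul_subset (hA : DoublingFamilyVariant μ A C) (hC : 0 ≤ C)
    (hQ : Q ∈ A) :
    ∃ S ∈ A, μ S ≤ ENNReal.ofReal (C ^ 2) * μ Q ∧ enlargement μ A (2 * μ Q) Q ⊆ S := by
  obtain ⟨-, ⟨huniv, hunivA⟩ | ⟨R, hRA, hQR, hRlower, hRupper⟩⟩ := hA.2 Q hQ
  · exact ⟨univ, hunivA, measure_le_ofReal_sq_mul_of_subset hC (subset_univ Q) huniv,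
      subset_univ _⟩
  · -- As `2 * μ Q ≤ μ R`, every set admitted in `Q̃` is admitted in the variant `R̃`.
    obtain ⟨⟨S, hSA, hSle, hRS⟩, -⟩ := hA.2 R hRA
    exact ⟨S, hSA, le_ofReal_sq_mul_of_le_of_le hC hSle hRupper,
      (enlargement_mono hRlower hQR).trans hRS⟩

theorem univ_mem_or_exists_superset_sq (hA : DoublingFamilyVariant μ A C) (hC : 0 ≤ C)
    (hQ : Q ∈ A) :
    (μ univ ≤ ENNReal.ofReal (C ^ 2) * μ Q ∧ univ ∈ A) ∨
      ∃ R ∈ A, Q ⊆ R ∧ 2 * μ Q ≤ μ R ∧ μ R ≤ ENNReal.ofReal (C ^ 2) * μ Q :=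
  (hA.2 Q hQ).2.imp
    (fun ⟨huniv, hunivA⟩ =>
      ⟨measure_le_ofReal_sq_mul_of_subset hC (subset_univ Q) huniv, hunivA⟩)
    (fun ⟨R, hRA, hQR, hRlower, hRupper⟩ =>
      ⟨R, hRA, hQR, hRlower, measure_le_ofReal_sq_mul_of_subset hC hQR hRupper⟩)

end DoublingFamilyVariant

end Enlargement

theorem doublingFamily_of_variant_general {M : Type*} [MeasurableSpace M] (μ : Measure M)
    (A : Set (Set M)) (C : ℝ) (hC : 0 ≤ C) (hA : DoublingFamilyVariant μ A C) :
    DoublingFamily μ A (C ^ 2) :=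
  ⟨hA.1, fun _ hQ =>
    ⟨hA.exists_enlargement_two_mul_subset hC hQ, hA.univ_mem_or_exists_superset_sq hC hQ⟩⟩

/-- If a family satisfies the doubling-family conditions with `μ R ≤ 2 μ Q` replaced by
`μ R ≤ μ Q` (with constant `C`), then it is a doubling family with constant `C²`. -/
theorem doublingFamily_of_variant
    {M : Type*} [MetricSpace M] [TopologicalSpace.SeparableSpace M]
    [MeasurableSpace M] [BorelSpace M] (μ : Measure M)
    (hballs : ∀ (x : M) (r : ℝ), μ (Metric.ball x r) < ⊤)
    (A : Set (Set M)) (C : ℝ) (hC : 0 < C)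
    (hA : DoublingFamilyVariant μ A C) :
    DoublingFamily μ A (C ^ 2) := by
  exact doublingFamily_of_variant_general μ A C hC.le hA

end
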